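/- With $\tilde H_2$ as in the context, define $\tilde H(x_1,x_2,y_1,y_2) = \frac12(x_1^2+y_1^2) + \tilde H_2(x_2,y_2)$ and the radial vector field $Y_0(z) = \frac12\,(x_1,\ x_2,\ y_1,\ y_2-\Lambda_3)$ at $z=(x_1,x_2,y_1,y_2)$. Then at every point $z$ with $x_2 \le 2\pi$ and $y_2 > 1$ that is different from the two critical points $(0,0,0,\Lambda_3)$ and $(0,2\pi,0,\Lambda_3)$, one has $\langle \nabla\tilde H(z), Y_0(z)\rangle > 0$. -/

import Mathlib

/-- The Kepler effective Hamiltonian `H₂(y) = -1/(2y²) - y`. -/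
noncomputable def H2K (y : ℝ) : ℝ := -(1 / (2 * y ^ 2)) - y

/-- `F(x,y) = ½(y - Λ₃)² - cos(x/2) + B`. -/
noncomputable def Ffun (Λ3 B : ℝ) (x y : ℝ) : ℝ :=
  (y - Λ3) ^ 2 / 2 - Real.cos (x / 2) + B

/-- The interpolated function `K(x,y) = (1 - f(y)) H₂(y) + f(y) F(x,y)`. -/
noncomputable def Kfun (Λ3 B : ℝ) (f : ℝ → ℝ) (x y : ℝ) : ℝ :=
  (1 - f y) * H2K y + f y * Ffun Λ3 B x y

/-- `G(x,y) = ½x² + ½(y - Λ₃)²`. -/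
noncomputable def Gfun (Λ3 : ℝ) (x y : ℝ) : ℝ := x ^ 2 / 2 + (y - Λ3) ^ 2 / 2

/-- `K̃(x,y) = (1 - g(x)) G(x,y) + g(x) K(x,y)`. -/
noncomputable def Ktil (Λ3 B : ℝ) (f g : ℝ → ℝ) (x y : ℝ) : ℝ :=
  (1 - g x) * Gfun Λ3 x y + g x * Kfun Λ3 B f x y

/-- `G̃(x,y) = ½(x - 4π)² + ½(y - Λ₃)²`. -/
noncomputable def Gtil (Λ3 : ℝ) (x y : ℝ) : ℝ :=
  (x - 4 * Real.pi) ^ 2 / 2 + (y - Λ3) ^ 2 / 2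

/-- The doubly interpolated function
`H̃₂(x,y) = g̃(x) K̃(x,y) + (1 - g̃(x)) G̃(x,y)`, with `g̃(x) = g(4π - x)`. -/
noncomputable def H2til (Λ3 B : ℝ) (f g : ℝ → ℝ) (x y : ℝ) : ℝ :=
  g (4 * Real.pi - x) * Ktil Λ3 B f g x y + (1 - g (4 * Real.pi - x)) * Gtil Λ3 x y

/-- The modified Hamiltonian `H̃(x₁,x₂,y₁,y₂) = ½(x₁² + y₁²) + H̃₂(x₂,y₂)` on `ℝ⁴`,
with coordinates ordered as `(x₁, x₂, y₁, y₂)`. -/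
noncomputable def Htil (Λ3 B : ℝ) (f g : ℝ → ℝ) (z : ℝ × ℝ × ℝ × ℝ) : ℝ :=
  (z.1 ^ 2 + z.2.2.1 ^ 2) / 2 + H2til Λ3 B f g z.2.1 z.2.2.2

theorem aux_H2K {y : ℝ} (hy : 1 < y) : HasDerivAt H2K (1 / y ^ 3 - 1) y := by
  have hy0 : y ≠ 0 := by positivity
  have h1 : HasDerivAt (fun t : ℝ => 2 * t ^ 2) (2 * (2 * y)) y := by
    simpa using ((hasDerivAt_pow 2 y).const_mul (2 : ℝ))
  have h2 := ((h1.inv (by positivity)).neg).sub (hasDerivAt_id y)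
  have h3 : HasDerivAt H2K _ y := h2.congr_of_eventuallyEq (by
    refine Filter.Eventually.of_forall fun t => ?_
    simp [H2K])
  convert h3 using 1
  field_simp

theorem aux_curve (Λ3 B : ℝ) (f g : ℝ → ℝ) (hf : Differentiable ℝ f) (hg : Differentiable ℝ g)
    (a b : ℝ → ℝ) (x y u v : ℝ) (ha : HasDerivAt a u 0) (hb : HasDerivAt b v 0)
    (ha0 : a 0 = x) (hb0 : b 0 = y) (hy : 1 < y)
    (hg1 : g (4 * Real.pi - x) = 1) (hg1' : deriv g (4 * Real.pi - x) = 0) :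
    HasDerivAt (fun t => H2til Λ3 B f g (a t) (b t))
      (u * (deriv g x * (Kfun Λ3 B f x y - Gfun Λ3 x y) + (1 - g x) * x
          + g x * (f y * (Real.sin (x / 2) / 2)))
        + v * ((1 - g x) * (y - Λ3) + g x * ((1 - f y) * (1 / y ^ 3 - 1) + f y * (y - Λ3)
          + deriv f y * (Ffun Λ3 B x y - H2K y)))) 0 := by
  subst ha0 hb0
  have hfb : HasDerivAt (fun t => f (b t)) (deriv f (b 0) * v) 0 :=
    (hf (b 0)).hasDerivAt.comp 0 hb
  have hga : HasDerivAt (fun t => g (a t)) (deriv g (a 0) * u) 0 :=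
    (hg (a 0)).hasDerivAt.comp 0 ha
  have hga' : HasDerivAt (fun t => g (4 * Real.pi - a t)) (deriv g (4 * Real.pi - a 0) * (-u)) 0 :=
    (hg (4 * Real.pi - a 0)).hasDerivAt.comp 0 (ha.const_sub _)
  have hH : HasDerivAt (fun t => H2K (b t)) ((1 / (b 0) ^ 3 - 1) * v) 0 :=
    (aux_H2K hy).comp 0 hb
  have hq : HasDerivAt (fun t => (b t - Λ3) ^ 2 / 2) ((b 0 - Λ3) * v) 0 := by
    refine HasDerivAt.congr_deriv (((hb.sub_const Λ3).pow 2).div_const 2) ?_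
    norm_num; try ring
  have hp : ∀ c : ℝ, HasDerivAt (fun t => (a t - c) ^ 2 / 2) ((a 0 - c) * u) 0 := by
    intro c
    refine HasDerivAt.congr_deriv (((ha.sub_const c).pow 2).div_const 2) ?_
    norm_num; try ring
  have hc : HasDerivAt (fun t => Real.cos (a t / 2)) (-Real.sin (a 0 / 2) * (u / 2)) 0 :=
    (ha.div_const 2).cos
  have hF : HasDerivAt (fun t => Ffun Λ3 B (a t) (b t)) _ 0 := (hq.sub hc).add_const B
  have hK : HasDerivAt (fun t => Kfun Λ3 B f (a t) (b t)) _ 0 :=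
    ((hfb.const_sub 1).mul hH).add (hfb.mul hF)
  have hG : HasDerivAt (fun t => Gfun Λ3 (a t) (b t)) (a 0 * u + (b 0 - Λ3) * v) 0 := by
    have := (hp 0).add hq
    simp only [sub_zero] at this
    exact this
  have hKt : HasDerivAt (fun t => Ktil Λ3 B f g (a t) (b t)) _ 0 :=
    ((hga.const_sub 1).mul hG).add (hga.mul hK)
  have hGt : HasDerivAt (fun t => Gtil Λ3 (a t) (b t)) _ 0 := (hp (4 * Real.pi)).add hq
  have hfin : HasDerivAt (fun t => H2til Λ3 B f g (a t) (b t)) _ 0 :=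
    (hga'.mul hKt).add ((hga'.const_sub 1).mul hGt)
  convert hfin using 1
  rw [hg1, hg1']
  ring

theorem aux_diff (Λ3 B : ℝ) (f g : ℝ → ℝ) (hf : Differentiable ℝ f) (hg : Differentiable ℝ g)
    (z : ℝ × ℝ × ℝ × ℝ) (hz : 1 < z.2.2.2) : DifferentiableAt ℝ (Htil Λ3 B f g) z := by
  have hH : DifferentiableAt ℝ (fun z : ℝ × ℝ × ℝ × ℝ => H2K z.2.2.2) z :=
    DifferentiableAt.comp (g := H2K) z (aux_H2K hz).differentiableAt (by fun_prop)
  unfold Htil H2til Ktil Gtil Kfun Gfun Ffun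
  fun_prop

theorem aux_deriv_const {f : ℝ → ℝ} {c x : ℝ} {s : Set ℝ} (hs : s ∈ nhds x)
    (h : ∀ t ∈ s, f t = c) : deriv f x = 0 := by
  have : f =ᶠ[nhds x] fun _ => c := Filter.mem_of_superset hs h
  rw [this.deriv_eq]; simp

theorem aux_sin {x : ℝ} (h1 : -(2 * Real.pi) < x) (h2 : x < 2 * Real.pi) (h0 : x ≠ 0) :
    0 < x * Real.sin (x / 2) := by
  rcases lt_or_gt_of_ne h0 with h | h
  · exact mul_pos_of_neg_of_neg h (Real.sin_neg_of_neg_of_neg_pi_lt (by linarith) (by linarith))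
  · exact mul_pos h (Real.sin_pos_of_pos_of_lt_pi (by linarith) (by linarith))

/-- First transversality claim of Section 5.3 of the paper: the radial vector field
`Y₀(z) = ½(x₁, x₂, y₁, y₂ - Λ₃)` satisfies `⟨∇H̃(z), Y₀(z)⟩ = dH̃(Y₀)(z) > 0` at every
point with `x₂ ≤ 2π`, `y₂ > 1` other than the two critical points. -/
theorem stmt_11 (Λ2 Λ3 ε0 B ε1 : ℝ) (f g : ℝ → ℝ)
    (hΛ2 : 1 < Λ2) (hΛ23 : Λ2 < Λ3)
    (hε0 : 0 < ε0) (hε0' : ε0 < (Λ3 - Λ2) / 2)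
    (hB : ∀ y ∈ Set.Icc (Λ2 + ε0) (Λ2 + 2 * ε0),
      (y - Λ3) ^ 2 / 2 + B + 1 + 1 / (2 * y ^ 2) + y ≤ 0)
    (hf : ContDiff ℝ (⊤ : ℕ∞) f) (hfmono : Monotone f)
    (hfrange : ∀ y, f y ∈ Set.Icc (0 : ℝ) 1)
    (hf0 : ∀ y, y ≤ Λ2 + ε0 → f y = 0)
    (hf1 : ∀ y, Λ2 + 2 * ε0 ≤ y → f y = 1)
    (hε1 : 0 < ε1) (hε1' : ε1 < Real.pi)
    (hg : ContDiff ℝ (⊤ : ℕ∞) g) (hgmono : Monotone g)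
    (hgrange : ∀ x, g x ∈ Set.Icc (0 : ℝ) 1)
    (hg0 : ∀ x, x ≤ -(2 * ε1) → g x = 0)
    (hg1 : ∀ x, -ε1 ≤ x → g x = 1) :
    ∀ z : ℝ × ℝ × ℝ × ℝ, z.2.1 ≤ 2 * Real.pi → 1 < z.2.2.2 →
      z ≠ (0, 0, 0, Λ3) → z ≠ (0, 2 * Real.pi, 0, Λ3) →
      0 < fderiv ℝ (Htil Λ3 B f g) z
        (z.1 / 2, z.2.1 / 2, z.2.2.1 / 2, (z.2.2.2 - Λ3) / 2) := by
  rintro ⟨x1, x, y1, y⟩ hx hy hz1 hz2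
  simp only at hx hy ⊢
  have hpi := Real.pi_pos
  have hfd : Differentiable ℝ f := hf.differentiable (by simp)
  have hgd : Differentiable ℝ g := hg.differentiable (by simp)
  have hf' : 0 ≤ deriv f y := hfmono.deriv_nonneg
  have hg' : 0 ≤ deriv g x := hgmono.deriv_nonneg
  have hl : ∀ c w : ℝ, HasDerivAt (fun t : ℝ => c + t * w) w 0 := fun c w => by
    simpa using ((hasDerivAt_id (0 : ℝ)).mul_const w).const_add c
  have hcur := aux_curve Λ3 B f g hfd hgd (fun t => x + t * (x / 2))
    (fun t => y + t * ((y - Λ3) / 2)) x y _ _ (hl _ _) (hl _ _) (by simp) (by simp) hy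
    (hg1 _ (by linarith))
    (aux_deriv_const (Ioi_mem_nhds (show -ε1 < 4 * Real.pi - x by linarith))
      (fun t ht => hg1 t (le_of_lt ht)))
  have hsq : ∀ c : ℝ, HasDerivAt (fun t : ℝ => (c + t * (c / 2)) ^ 2) (c ^ 2) 0 := fun c => by
    refine HasDerivAt.congr_deriv ((hl c (c / 2)).pow 2) ?_
    norm_num; try ring
  have htot : HasDerivAt (fun t : ℝ => Htil Λ3 B f g
      (x1 + t * (x1 / 2), x + t * (x / 2), y1 + t * (y1 / 2), y + t * ((y - Λ3) / 2))) _ 0 :=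
    (((hsq x1).add (hsq y1)).div_const 2).add hcur
  have hline : HasDerivAt (fun t : ℝ =>
      (x1 + t * (x1 / 2), x + t * (x / 2), y1 + t * (y1 / 2), y + t * ((y - Λ3) / 2)))
      (x1 / 2, x / 2, y1 / 2, (y - Λ3) / 2) 0 :=
    (hl _ _).prodMk ((hl _ _).prodMk ((hl _ _).prodMk (hl _ _)))
  have hF := (aux_diff Λ3 B f g hfd hgd (x1, x, y1, y) hy).hasFDerivAt
  have hcomp := HasFDerivAt.comp_hasDerivAt_of_eq (0 : ℝ) hF hline (by simp)
  rw [hcomp.unique htot]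
  clear hcomp htot hline hF hcur hsq hl
  obtain ⟨hfa, hfb⟩ := hfrange y
  obtain ⟨hga, hgb⟩ := hgrange x
  have hcos1 := Real.neg_one_le_cos (x / 2)
  have hy3 : 1 / y ^ 3 - 1 < 0 := by
    have : 1 < y ^ 3 := one_lt_pow₀ hy (by norm_num)
    have := (div_lt_one (by positivity)).2 this
    linarith
  have hB1 : B + 1 < 0 := by
    have := hB (Λ2 + ε0) ⟨le_rfl, by linarith⟩
    have h2 : 0 ≤ 1 / (2 * (Λ2 + ε0) ^ 2) := by positivity
    nlinarith [sq_nonneg (Λ2 + ε0 - Λ3)]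
  -- the term with the derivative of g
  have hKG : Kfun Λ3 B f x y ≤ Gfun Λ3 x y := by
    have h1 : H2K y ≤ Gfun Λ3 x y := by
      have h2 : 0 ≤ 1 / (2 * y ^ 2) := by positivity
      have h3 : 0 ≤ Gfun Λ3 x y := by unfold Gfun; positivity
      unfold H2K; linarith
    have h2 : Ffun Λ3 B x y ≤ Gfun Λ3 x y := by
      unfold Ffun Gfun; nlinarith [sq_nonneg x]
    unfold Kfun
    nlinarith [mul_le_mul_of_nonneg_left h1 (sub_nonneg.2 hfb), mul_le_mul_of_nonneg_left h2 hfa]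
  have T1 : 0 ≤ x * (deriv g x * (Kfun Λ3 B f x y - Gfun Λ3 x y)) := by
    rcases le_or_gt x (-ε1) with h | h
    · exact mul_nonneg_of_nonpos_of_nonpos (by linarith)
        (mul_nonpos_of_nonneg_of_nonpos hg' (by linarith))
    · rw [aux_deriv_const (Ioi_mem_nhds h) (fun t ht => hg1 t (le_of_lt ht))]; simp
  have hsin : 0 ≤ g x * (x * Real.sin (x / 2)) := by
    rcases le_or_gt x (-(2 * ε1)) with h | h
    · rw [hg0 x h]; simp
    · refine mul_nonneg hga ?_
      rcases eq_or_ne x 0 with h0 | h0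
      · simp [h0]
      rcases hx.eq_or_lt with h2 | h2
      · rw [h2, mul_div_cancel_left₀ _ (two_ne_zero), Real.sin_pi]; simp
      · exact (aux_sin (by linarith) h2 h0).le
  have T3 : 0 ≤ f y * (g x * (x * Real.sin (x / 2))) := mul_nonneg hfa hsin
  have T2 : 0 ≤ (1 - g x) * x ^ 2 := mul_nonneg (by linarith) (sq_nonneg x)
  -- the `y` terms
  have T4 : 0 ≤ (y - Λ3) * (deriv f y * (Ffun Λ3 B x y - H2K y)) := by
    rcases lt_or_ge y (Λ2 + ε0) with h | h
    · rw [aux_deriv_const (Iio_mem_nhds h) (fun t ht => hf0 t (le_of_lt ht))]; simp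
    rcases lt_or_ge (Λ2 + 2 * ε0) y with h' | h'
    · rw [aux_deriv_const (Ioi_mem_nhds h') (fun t ht => hf1 t (le_of_lt ht))]; simp
    have := hB y ⟨h, h'⟩
    refine mul_nonneg_of_nonpos_of_nonpos (by linarith) (mul_nonpos_of_nonneg_of_nonpos hf' ?_)
    unfold Ffun H2K
    linarith
  have T5 : (0 ≤ (1 - f y) * ((y - Λ3) * (1 / y ^ 3 - 1))) ∧
      (y ≠ Λ3 → 0 < (1 - f y) * ((y - Λ3) * (1 / y ^ 3 - 1)) + f y * (y - Λ3) ^ 2) := by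
    rcases lt_or_ge y (Λ2 + 2 * ε0) with h | h
    · have hp : 0 < (y - Λ3) * (1 / y ^ 3 - 1) := mul_pos_of_neg_of_neg (by linarith) hy3
      refine ⟨mul_nonneg (by linarith) hp.le, fun hne => ?_⟩
      have : 0 < (y - Λ3) ^ 2 := by have := sub_ne_zero.2 hne; positivity
      rcases hfa.eq_or_lt with h0 | h0
      · rw [← h0]; linarith
      · have := mul_pos h0 this
        have := mul_nonneg (sub_nonneg.2 hfb) hp.le
        linarith
    · rw [hf1 y h]
      refine ⟨by simp, fun hne => ?_⟩
      have := sub_ne_zero.2 hne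
      have : 0 < (y - Λ3) ^ 2 := by positivity
      linarith
  have T6 := mul_nonneg hga T4
  have key : (x1 ^ 2 + y1 ^ 2) / 2 + (x / 2 * (deriv g x * (Kfun Λ3 B f x y - Gfun Λ3 x y)
        + (1 - g x) * x + g x * (f y * (Real.sin (x / 2) / 2)))
      + (y - Λ3) / 2 * ((1 - g x) * (y - Λ3) + g x * ((1 - f y) * (1 / y ^ 3 - 1)
        + f y * (y - Λ3) + deriv f y * (Ffun Λ3 B x y - H2K y))))
      = (x1 ^ 2 + y1 ^ 2) / 2
        + (x * (deriv g x * (Kfun Λ3 B f x y - Gfun Λ3 x y))) / 2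
        + ((1 - g x) * x ^ 2) / 2 + (f y * (g x * (x * Real.sin (x / 2)))) / 4
        + ((1 - g x) * (y - Λ3) ^ 2
          + g x * ((1 - f y) * ((y - Λ3) * (1 / y ^ 3 - 1)) + f y * (y - Λ3) ^ 2)) / 2
        + (g x * ((y - Λ3) * (deriv f y * (Ffun Λ3 B x y - H2K y)))) / 2 := by
    ring
  rw [key]
  have hx1 := sq_nonneg x1
  have hy1 := sq_nonneg y1
  rcases eq_or_ne y Λ3 with hyΛ | hyΛ
  · have hf1y : f y = 1 := hf1 y (by linarith)
    have T7 : (1 - g x) * (y - Λ3) ^ 2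
        + g x * ((1 - f y) * ((y - Λ3) * (1 / y ^ 3 - 1)) + f y * (y - Λ3) ^ 2) = 0 := by
      rw [hyΛ]; ring
    rw [T7]
    by_cases h11 : x1 = 0 ∧ y1 = 0
    · obtain ⟨rfl, rfl⟩ := h11
      have hx0 : x ≠ 0 := by rintro rfl; exact hz1 (by rw [hyΛ])
      have hx2 : x < 2 * Real.pi := lt_of_le_of_ne hx (by rintro rfl; exact hz2 (by rw [hyΛ]))
      have hxx : 0 < x ^ 2 := by positivity
      rw [hf1y] at T3 ⊢
      rcases hgb.eq_or_lt with h0 | h0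
      · have hxe : -(2 * ε1) < x := by
          by_contra hcon
          have := hg0 x (by linarith)
          linarith
        have := aux_sin (by linarith) hx2 hx0
        rw [h0] at T2 T6 ⊢
        linarith
      · have := mul_pos (sub_pos.2 h0) hxx
        linarith
    · have : 0 < x1 ^ 2 + y1 ^ 2 := by
        by_contra hcon
        exact h11 ⟨pow_eq_zero_iff two_ne_zero |>.1 (by linarith),
          pow_eq_zero_iff two_ne_zero |>.1 (by linarith)⟩
      linarith
  · have hp := T5.2 hyΛ
    have hs : 0 < (y - Λ3) ^ 2 := by have := sub_ne_zero.2 hyΛ; positivity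
    have : 0 < (1 - g x) * (y - Λ3) ^ 2
        + g x * ((1 - f y) * ((y - Λ3) * (1 / y ^ 3 - 1)) + f y * (y - Λ3) ^ 2) := by
      rcases hga.eq_or_lt with h0 | h0
      · rw [← h0]; linarith
      · have := mul_pos h0 hp
        have := mul_nonneg (sub_nonneg.2 hgb) hs.le
        linarith
    linarith
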